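/- arXiv:2405.17412 — 2 statements merged into one kernel-verified Lean document; each statement's English description precedes it below -/
import Mathlib

section
/- If k̃_{ij} = K_{ii} + K_{jj} − 2K_{ij} > 0, then the pushforward of μ under the map ω ↦ d²_{ij}(ω) is the Gamma distribution with shape parameter d/2 and rate parameter 1/(2 k̃_{ij}) (equivalently, scale 2 k̃_{ij}). -/
open MeasureTheory ProbabilityTheory Matrix

/-- Product over pairs is the pushforward of the iterated product. -/
lemma pi_pair_eq_map (k d : ℕ) :
    Measure.pi (fun _ : Fin k × Fin d => gaussianReal 0 1)
      = (Measure.pi (fun _ : Fin d => Measure.pi (fun _ : Fin k => gaussianReal 0 1))).map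
        (fun η p => η p.2 p.1) := by
  refine Measure.pi_eq fun s hs => ?_
  rw [Measure.map_apply (by fun_prop) (MeasurableSet.univ_pi hs)]
  have : (fun (η : Fin d → Fin k → ℝ) (p : Fin k × Fin d) => η p.2 p.1) ⁻¹' (Set.univ.pi s)
      = Set.univ.pi fun c => Set.univ.pi fun l => s (l, c) := by
    ext η
    simp only [Set.mem_preimage, Set.mem_pi, Set.mem_univ, true_imp_iff, Prod.forall]
    exact forall_comm
  rw [this, Measure.pi_pi]
  simp_rw [Measure.pi_pi]
  rw [Fintype.prod_prod_type, Finset.prod_comm]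

/-- A linear form of a standard Gaussian vector. -/
lemma map_linear_form (k : ℕ) (a : Fin k → ℝ) :
    (Measure.pi (fun _ : Fin k => gaussianReal 0 1)).map (fun η => ∑ l, a l * η l)
      = gaussianReal 0 (∑ l, (a l) ^ 2).toNNReal := by
  apply Measure.ext_of_charFun
  have hind : iIndepFun (fun l (η : Fin k → ℝ) => a l * η l)
      (Measure.pi (fun _ : Fin k => gaussianReal 0 1)) :=
    iIndepFun_pi (X := fun l x => a l * x) (fun l => by fun_prop)
  rw [hind.charFun_map_fun_sum_eq_prod
    (fun l => Measurable.aemeasurable (by fun_prop))]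
  have h1 : ∀ l, (Measure.pi (fun _ : Fin k => gaussianReal 0 1)).map (fun η => a l * η l)
      = gaussianReal 0 ((a l) ^ 2).toNNReal := by
    intro l
    have h := (measurePreserving_eval (fun _ : Fin k => gaussianReal 0 1) l).map_eq
    have : (fun η : Fin k → ℝ => a l * η l) = (fun x => a l * x) ∘ (Function.eval l) := rfl
    rw [this, ← Measure.map_map (by fun_prop) (by fun_prop), h, gaussianReal_map_const_mul]
    congr 1
    · simp
    · ext; simp [sq_nonneg]
  ext t
  simp only [h1, Finset.prod_apply, charFun_gaussianReal, ← Complex.exp_sum]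
  congr 1
  simp only [Real.coe_toNNReal _ (sq_nonneg _),
    Real.coe_toNNReal _ (Finset.sum_nonneg fun l _ => sq_nonneg (a l))]
  push_cast
  simp [Finset.sum_mul, Finset.sum_div, Finset.sum_neg_distrib]

lemma mgf_sq_gaussian (v : NNReal) (hv : v ≠ 0) (t : ℝ) :
    mgf (fun x => x ^ 2) (gaussianReal 0 v) t
      = √((1 / (2 * v)) / (1 / (2 * v) - t)) := by
  have hv' : (0 : ℝ) < v := by positivity
  rw [mgf, integral_gaussianReal_eq_integral_smul hv]
  have : ∀ x : ℝ, gaussianPDFReal 0 v x • Real.exp (t * x ^ 2)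
      = (√(2 * Real.pi * v))⁻¹ * Real.exp (-(1 / (2 * v) - t) * x ^ 2) := by
    intro x
    rw [gaussianPDFReal, smul_eq_mul, mul_assoc, ← Real.exp_add]
    congr 2
    field_simp
    ring
  simp_rw [this]
  rw [integral_const_mul, integral_gaussian, ← Real.sqrt_inv, ← Real.sqrt_mul (by positivity)]
  congr 1
  have := Real.pi_pos
  field_simp

lemma mgf_gamma (a r : ℝ) (ha : 0 < a) (hr : 0 < r) (t : ℝ) :
    mgf id (gammaMeasure a r) t = if t < r then (r / (r - t)) ^ a else 0 := by
  have hG := Real.Gamma_pos_of_pos ha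
  rw [mgf, gammaMeasure, integral_withDensity_eq_integral_toReal_smul
    (by unfold gammaPDF; fun_prop) (ae_of_all _ fun x => by simp [gammaPDF])]
  have h1 : ∀ x : ℝ, (gammaPDF a r x).toReal • Real.exp (t * id x)
      = (Set.Ici (0:ℝ)).indicator
        (fun x => r ^ a / Real.Gamma a * (x ^ (a - 1) * Real.exp (-((r - t) * x)))) x := by
    intro x
    rw [gammaPDF, ENNReal.toReal_ofReal (gammaPDFReal_nonneg ha hr x), gammaPDFReal,
      Set.indicator_apply]
    simp only [Set.mem_Ici, id, smul_eq_mul]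
    split_ifs
    · rw [mul_assoc, mul_assoc, ← Real.exp_add]
      ring_nf
    · simp
  simp_rw [h1]
  rw [integral_indicator measurableSet_Ici, integral_Ici_eq_integral_Ioi, integral_const_mul]
  split_ifs with h
  · rw [Real.integral_rpow_mul_exp_neg_mul_Ioi ha (sub_pos.2 h),
      Real.div_rpow zero_le_one (sub_pos.2 h).le, Real.div_rpow hr.le (sub_pos.2 h).le,
      Real.one_rpow]
    field_simp
  · rw [integral_undef, mul_zero]
    intro hint
    apply not_integrableOn_Ioi_rpow (a - 1)
    refine Integrable.mono' hint (by fun_prop) ?_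
    filter_upwards [ae_restrict_mem measurableSet_Ioi] with x hx
    have hx : 0 < x := hx
    rw [Real.norm_of_nonneg (by positivity)]
    refine le_mul_of_one_le_right (by positivity) (Real.one_le_exp ?_)
    nlinarith

lemma measure_eq_gamma_of_mgf (a r : ℝ) (ha : 0 < a) (hr : 0 < r) (ν : Measure ℝ)
    [IsProbabilityMeasure ν]
    (h : ∀ t, mgf id ν t = if t < r then (r / (r - t)) ^ a else 0) :
    ν = gammaMeasure a r := by
  have := isProbabilityMeasure_gammaMeasure ha hr
  have hm : mgf id ν = mgf id (gammaMeasure a r) := by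
    ext t; rw [h, mgf_gamma a r ha hr]
  have hsub : Set.Iio r ⊆ integrableExpSet id ν := by
    intro t ht
    by_contra hc
    have h0 := mgf_undef (X := id) (μ := ν) (t := t) hc
    rw [h, if_pos (Set.mem_Iio.1 ht)] at h0
    have : 0 < r - t := sub_pos.2 ht
    have : 0 < (r / (r - t)) ^ a := by positivity
    linarith
  have h0 : (0 : ℝ) ∈ interior (integrableExpSet id ν) :=
    mem_interior.2 ⟨_, hsub, isOpen_Iio, hr⟩
  apply Measure.ext_of_charFun
  ext t
  rw [← complexMGF_id_mul_I, ← complexMGF_id_mul_I]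
  exact eqOn_complexMGF_of_mgf hm (by simpa using h0)

/-- If `k̃ᵢⱼ = K i i + K j j - 2 * K i j > 0` (with `K = A * Aᵀ`), then the pushforward
of the i.i.d. standard Gaussian product measure `μ` under the squared distance map
`ω ↦ d²ᵢⱼ(ω) = ∑ c, (Y i c ω - Y j c ω)²` is the Gamma distribution with shape `d / 2`
and rate `1 / (2 * k̃ᵢⱼ)`. -/
theorem pushforward_squared_distance_gamma
    (n k d : ℕ) (hn : 0 < n) (hk : 0 < k) (hd : 0 < d)
    (A : Matrix (Fin n) (Fin k) ℝ)
    (μ : Measure ((Fin k × Fin d) → ℝ))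
    (hμ : μ = Measure.pi (fun _ : Fin k × Fin d => gaussianReal 0 1))
    (K : Matrix (Fin n) (Fin n) ℝ) (hK : K = A * Aᵀ)
    (Y : Fin n → Fin d → ((Fin k × Fin d) → ℝ) → ℝ)
    (hY : ∀ i c ω, Y i c ω = ∑ l, A i l * ω (l, c))
    (i j : Fin n) (ktil : ℝ) (hktil : ktil = K i i + K j j - 2 * K i j)
    (hpos : 0 < ktil) :
    μ.map (fun ω => ∑ c, (Y i c ω - Y j c ω) ^ 2)
      = gammaMeasure ((d : ℝ) / 2) (1 / (2 * ktil)) := by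
  set a : Fin k → ℝ := fun l => A i l - A j l with ha
  have hk2 : ktil = ∑ l, (a l) ^ 2 := by
    rw [hktil, hK]
    simp only [Matrix.mul_apply, Matrix.transpose_apply, ha, Finset.mul_sum,
      ← Finset.sum_add_distrib, ← Finset.sum_sub_distrib]
    refine Finset.sum_congr rfl fun l _ => ?_
    ring
  set v : NNReal := ktil.toNNReal with hv
  have hvk : (v : ℝ) = ktil := Real.coe_toNNReal _ hpos.le
  have hv0 : v ≠ 0 := by simpa [hv] using hpos
  have hfun : (fun ω => ∑ c, (Y i c ω - Y j c ω) ^ 2)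
      = fun ω : (Fin k × Fin d) → ℝ => ∑ c, (∑ l, a l * ω (l, c)) ^ 2 := by
    ext ω
    simp only [hY, ha, sub_mul, Finset.sum_sub_distrib]
  rw [hfun, hμ, pi_pair_eq_map, Measure.map_map (by fun_prop) (by fun_prop)]
  set ρ := Measure.pi (fun _ : Fin k => gaussianReal 0 1) with hρ
  have hd' : (0 : ℝ) < d := by exact_mod_cast hd
  have hmeas : Measurable ((fun ω : (Fin k × Fin d) → ℝ => ∑ c, (∑ l, a l * ω (l, c)) ^ 2) ∘
      (fun (η : Fin d → Fin k → ℝ) (p : Fin k × Fin d) => η p.2 p.1)) := by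
    apply Measurable.comp <;> fun_prop
  have := Measure.isProbabilityMeasure_map (μ := Measure.pi fun _ : Fin d => ρ)
    hmeas.aemeasurable
  refine measure_eq_gamma_of_mgf _ _ (by positivity) (by positivity) _ fun t => ?_
  rw [mgf_id_map hmeas.aemeasurable]
  have hind : iIndepFun (fun c (η : Fin d → Fin k → ℝ) => (∑ l, a l * η c l) ^ 2)
      (Measure.pi fun _ : Fin d => ρ) :=
    iIndepFun_pi (X := fun _ (η : Fin k → ℝ) => (∑ l, a l * η l) ^ 2)
      (fun c => Measurable.aemeasurable (by fun_prop))
  have hsum := hind.mgf_sum (t := t) (fun c => by fun_prop) Finset.univ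
  have hfe : ((fun ω : (Fin k × Fin d) → ℝ => ∑ c, (∑ l, a l * ω (l, c)) ^ 2) ∘
      (fun (η : Fin d → Fin k → ℝ) (p : Fin k × Fin d) => η p.2 p.1))
      = ∑ c, fun (η : Fin d → Fin k → ℝ) => (∑ l, a l * η c l) ^ 2 := by
    ext η; simp
  rw [hfe, hsum]
  have hone : ∀ c, mgf (fun (η : Fin d → Fin k → ℝ) => (∑ l, a l * η c l) ^ 2)
      (Measure.pi fun _ : Fin d => ρ) t = √((1 / (2 * ktil)) / (1 / (2 * ktil) - t)) := by
    intro c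
    have hl : (Measure.pi fun _ : Fin d => ρ).map (fun η => ∑ l, a l * η c l)
        = gaussianReal 0 v := by
      have h := (measurePreserving_eval (fun _ : Fin d => ρ) c).map_eq
      have h2 : (fun η : Fin d → Fin k → ℝ => ∑ l, a l * η c l)
          = (fun η => ∑ l, a l * η l) ∘ (Function.eval c) := rfl
      rw [h2, ← Measure.map_map (by fun_prop) (by fun_prop), h, hρ, map_linear_form, hv, hk2]
    rw [← hvk, ← mgf_sq_gaussian v hv0, ← hl,
      mgf_map (Measurable.aemeasurable (by fun_prop)) (by fun_prop)]
    rfl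
  simp_rw [hone]
  rw [Finset.prod_const, Finset.card_univ, Fintype.card_fin]
  split_ifs with ht
  · have hp : 0 ≤ (1 / (2 * ktil)) / (1 / (2 * ktil) - t) :=
      div_nonneg (by positivity) (sub_pos.2 ht).le
    rw [Real.sqrt_eq_rpow, ← Real.rpow_natCast, ← Real.rpow_mul hp]
    congr 1
    ring
  · rw [Real.sqrt_eq_zero_of_nonpos, zero_pow hd.ne']
    exact div_nonpos_of_nonneg_of_nonpos (by positivity) (by linarith)
end

section
/- For any indices i, j, m, n, the covariance of the squared distances satisfies ∫ d²_{ij}(ω) · d²_{mn}(ω) dμ(ω) − (∫ d²_{ij}(ω) dμ(ω)) · (∫ d²_{mn}(ω) dμ(ω)) = 2d · (K_{im} + K_{jn} − K_{in} − K_{jm})². -/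
open MeasureTheory ProbabilityTheory Matrix


section Helpers

lemma mgf_linform {ι : Type*} [Fintype ι] (u : ι → ℝ) (t : ℝ) :
    mgf (fun ω : ι → ℝ => ∑ i, u i * ω i) (Measure.pi (fun _ : ι => gaussianReal 0 1)) t
      = Real.exp ((∑ i, u i ^ 2) * t ^ 2 / 2) := by
  have hind : iIndepFun (fun (i : ι) (ω : ι → ℝ) => u i * ω i)
      (Measure.pi (fun _ : ι => gaussianReal 0 1)) :=
    iIndepFun_pi (X := fun i x => u i * x) (fun i => by fun_prop)
  have h := hind.mgf_sum (t := t) (fun i => by fun_prop) Finset.univ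
  have e : (∑ i, fun ω : ι → ℝ => u i * ω i) = fun ω : ι → ℝ => ∑ i, u i * ω i := by
    ext ω; simp
  rw [e] at h
  rw [h, Finset.sum_mul, Finset.sum_div, Real.exp_sum]
  refine Finset.prod_congr rfl fun i _ => ?_
  rw [mgf_const_mul]
  have hm : (Measure.pi (fun _ : ι => gaussianReal 0 1)).map (fun ω : ι → ℝ => ω i)
      = gaussianReal 0 1 :=
    (measurePreserving_eval (fun _ : ι => gaussianReal 0 1) i).map_eq
  rw [mgf_gaussianReal hm]
  congr 1
  push_cast
  ring

lemma mem_linform {ι : Type*} [Fintype ι] (u : ι → ℝ) (t : ℝ) :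
    t ∈ interior (integrableExpSet (fun ω : ι → ℝ => ∑ i, u i * ω i)
      (Measure.pi (fun _ : ι => gaussianReal 0 1))) := by
  have : integrableExpSet (fun ω : ι → ℝ => ∑ i, u i * ω i)
      (Measure.pi (fun _ : ι => gaussianReal 0 1)) = Set.univ := by
    ext s
    simp only [Set.mem_univ, iff_true]
    by_contra hs
    have h := mgf_linform u s
    rw [mgf_undef hs] at h
    exact (Real.exp_pos _).ne h
  rw [this]; simp

lemma memLp_linform {ι : Type*} [Fintype ι] (u : ι → ℝ) :
    MemLp (fun ω : ι → ℝ => ∑ i, u i * ω i) 4 (Measure.pi (fun _ : ι => gaussianReal 0 1)) :=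
  memLp_of_mem_interior_integrableExpSet (mem_linform u 0) 4

lemma moments_linform {ι : Type*} [Fintype ι] (u : ι → ℝ) :
    (∫ ω : ι → ℝ, (∑ i, u i * ω i) ^ 2 ∂(Measure.pi (fun _ : ι => gaussianReal 0 1))
      = ∑ i, u i ^ 2) ∧
    (∫ ω : ι → ℝ, (∑ i, u i * ω i) ^ 4 ∂(Measure.pi (fun _ : ι => gaussianReal 0 1))
      = 3 * (∑ i, u i ^ 2) ^ 2) := by
  set X : (ι → ℝ) → ℝ := fun ω => ∑ i, u i * ω i with hX
  set P := Measure.pi (fun _ : ι => gaussianReal 0 1) with hP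
  set s := ∑ i, u i ^ 2 with hs
  have D : ∀ (n : ℕ) (t : ℝ), HasDerivAt (fun t => ∫ ω, X ω ^ n * Real.exp (t * X ω) ∂P)
      (∫ ω, X ω ^ (n + 1) * Real.exp (t * X ω) ∂P) t :=
    fun n t => hasDerivAt_integral_pow_mul_exp_real (mem_linform u t) n
  have E : ∀ t : ℝ, HasDerivAt (fun t : ℝ => Real.exp (s * t ^ 2 / 2))
      (Real.exp (s * t ^ 2 / 2) * (s * t)) t := by
    intro t
    have h : HasDerivAt (fun t : ℝ => s * t ^ 2 / 2) (s * t) t := by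
      convert! ((hasDerivAt_pow 2 t).const_mul s).div_const 2 using 1
      push_cast; ring
    exact h.exp
  have Q : ∀ (n : ℕ) (p p' : ℝ → ℝ),
      (∀ t, HasDerivAt p (p' t) t) →
      (∀ t, ∫ ω, X ω ^ n * Real.exp (t * X ω) ∂P = p t * Real.exp (s * t ^ 2 / 2)) →
      ∀ t, ∫ ω, X ω ^ (n + 1) * Real.exp (t * X ω) ∂P
        = (p' t + p t * (s * t)) * Real.exp (s * t ^ 2 / 2) := by
    intro n p p' hp h t
    have h1 := D n t
    rw [funext h] at h1
    rw [h1.unique ((hp t).mul (E t))]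
    ring
  have f0 : ∀ t, ∫ ω, X ω ^ 0 * Real.exp (t * X ω) ∂P = 1 * Real.exp (s * t ^ 2 / 2) := by
    intro t
    have := mgf_linform u t
    simpa [mgf] using! this
  have f1 := Q 0 (fun _ => 1) (fun _ => 0) (fun t => hasDerivAt_const t 1) f0
  have f2 := Q 1 (fun t => s * t) (fun _ => s)
    (fun t => by simpa using (hasDerivAt_id t).const_mul s)
    (fun t => by rw [f1 t]; ring)
  have f3 := Q 2 (fun t => s + s ^ 2 * t ^ 2) (fun t => 2 * s ^ 2 * t)
    (fun t => by
      convert! ((hasDerivAt_pow 2 t).const_mul (s ^ 2)).const_add s using 1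
      push_cast; ring)
    (fun t => by rw [f2 t]; ring)
  have f4 := Q 3 (fun t => 3 * s ^ 2 * t + s ^ 3 * t ^ 3)
    (fun t => 3 * s ^ 2 + 3 * s ^ 3 * t ^ 2)
    (fun t => by
      convert! ((hasDerivAt_id t).const_mul (3 * s ^ 2)).add
        ((hasDerivAt_pow 3 t).const_mul (s ^ 3)) using 1
      push_cast; ring)
    (fun t => by rw [f3 t]; ring)
  constructor
  · simpa using f2 0
  · simpa using f4 0

lemma integrable_linform_sq {ι : Type*} [Fintype ι] (u : ι → ℝ) :
    Integrable (fun ω : ι → ℝ => (∑ i, u i * ω i) ^ 2)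
      (Measure.pi (fun _ : ι => gaussianReal 0 1)) :=
  ((memLp_linform u).mono_exponent (p := 2) (by norm_num)).integrable_sq

lemma integrable_linform_four {ι : Type*} [Fintype ι] (u : ι → ℝ) :
    Integrable (fun ω : ι → ℝ => (∑ i, u i * ω i) ^ 4)
      (Measure.pi (fun _ : ι => gaussianReal 0 1)) := by
  have h := (memLp_linform u).integrable_norm_pow (p := 4) (by norm_num)
  refine h.congr (Filter.Eventually.of_forall fun ω => ?_)
  simp only [Real.norm_eq_abs]
  exact Even.pow_abs (by decide) _

lemma polar_eq {ι : Type*} [Fintype ι] (u v : ι → ℝ) (ω : ι → ℝ) :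
    (∑ i, u i * ω i) ^ 2 * (∑ i, v i * ω i) ^ 2
      = (1 / 12) * ((((∑ i, (u i + v i) * ω i) ^ 4 + (∑ i, (u i - v i) * ω i) ^ 4)
        - 2 * (∑ i, u i * ω i) ^ 4) - 2 * (∑ i, v i * ω i) ^ 4) := by
  simp only [add_mul, sub_mul, Finset.sum_add_distrib, Finset.sum_sub_distrib]
  ring

lemma mixed_linform {ι : Type*} [Fintype ι] (u v : ι → ℝ) :
    Integrable (fun ω : ι → ℝ => (∑ i, u i * ω i) ^ 2 * (∑ i, v i * ω i) ^ 2)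
      (Measure.pi (fun _ : ι => gaussianReal 0 1)) ∧
    ∫ ω : ι → ℝ, (∑ i, u i * ω i) ^ 2 * (∑ i, v i * ω i) ^ 2
      ∂(Measure.pi (fun _ : ι => gaussianReal 0 1))
      = (∑ i, u i ^ 2) * (∑ i, v i ^ 2) + 2 * (∑ i, u i * v i) ^ 2 := by
  simp only [polar_eq]
  have ha := integrable_linform_four (fun i => u i + v i)
  have hb := integrable_linform_four (fun i => u i - v i)
  have hu := (integrable_linform_four u).const_mul 2
  have hv := (integrable_linform_four v).const_mul 2
  refine ⟨(((ha.add hb).sub hu).sub hv).const_mul _, ?_⟩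
  rw [integral_const_mul, integral_sub (by exact (ha.add hb).sub hu) hv,
    integral_sub (by exact ha.add hb) hu, integral_add ha hb, integral_const_mul, integral_const_mul,
    (moments_linform (fun i => u i + v i)).2, (moments_linform (fun i => u i - v i)).2,
    (moments_linform u).2, (moments_linform v).2]
  have e1 : ∑ i, (u i + v i) ^ 2 = ∑ i, u i ^ 2 + 2 * ∑ i, u i * v i + ∑ i, v i ^ 2 := by
    rw [Finset.mul_sum, ← Finset.sum_add_distrib, ← Finset.sum_add_distrib]
    exact Finset.sum_congr rfl fun i _ => by ring
  have e2 : ∑ i, (u i - v i) ^ 2 = ∑ i, u i ^ 2 - 2 * ∑ i, u i * v i + ∑ i, v i ^ 2 := by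
    rw [Finset.mul_sum, ← Finset.sum_sub_distrib, ← Finset.sum_add_distrib]
    exact Finset.sum_congr rfl fun i _ => by ring
  rw [e1, e2]
  ring

end Helpers

/-- For any indices `i j m n`, the covariance of the squared distances
`d²ᵢⱼ(ω) = ∑ c, (Y i c ω - Y j c ω)²` under the i.i.d. standard Gaussian product
measure satisfies
`∫ d²ᵢⱼ d²ₘₙ dμ - (∫ d²ᵢⱼ dμ) * (∫ d²ₘₙ dμ) = 2 * d * (K i m + K j n - K i n - K j m)²`,
where `K = A * Aᵀ`.  (The number of points is denoted `N` here.) -/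
theorem covariance_squared_distances
    (N k d : ℕ) (hN : 0 < N) (hk : 0 < k) (hd : 0 < d)
    (A : Matrix (Fin N) (Fin k) ℝ)
    (μ : Measure ((Fin k × Fin d) → ℝ))
    (hμ : μ = Measure.pi (fun _ : Fin k × Fin d => gaussianReal 0 1))
    (K : Matrix (Fin N) (Fin N) ℝ) (hK : K = A * Aᵀ)
    (Y : Fin N → Fin d → ((Fin k × Fin d) → ℝ) → ℝ)
    (hY : ∀ i c ω, Y i c ω = ∑ l, A i l * ω (l, c))
    (i j m n : Fin N) :
    (∫ ω, (∑ c, (Y i c ω - Y j c ω) ^ 2) * (∑ c, (Y m c ω - Y n c ω) ^ 2) ∂μ)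
        - (∫ ω, (∑ c, (Y i c ω - Y j c ω) ^ 2) ∂μ)
          * (∫ ω, (∑ c, (Y m c ω - Y n c ω) ^ 2) ∂μ)
      = 2 * (d : ℝ) * (K i m + K j n - K i n - K j m) ^ 2 := by
  classical
  subst hμ hK
  -- coefficient vector of `Y p c - Y q c`
  let U : Fin N → Fin N → Fin d → (Fin k × Fin d) → ℝ :=
    fun p q c x => if x.2 = c then A p x.1 - A q x.1 else 0
  have hU : ∀ p q c ω, Y p c ω - Y q c ω = ∑ x, U p q c x * ω x := by
    intro p q c ω
    rw [hY, hY, Fintype.sum_prod_type, ← Finset.sum_sub_distrib]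
    refine Finset.sum_congr rfl fun l _ => ?_
    simp [U, sub_mul]
  have hUU : ∀ p q r s c c', ∑ x, U p q c x * U r s c' x
      = if c = c' then ∑ l, (A p l - A q l) * (A r l - A s l) else 0 := by
    intro p q r s c c'
    rw [Fintype.sum_prod_type]
    by_cases h : c = c'
    · subst h; simp [U]
    · simp [U, h, Ne.symm h]
  have hUsq : ∀ p q c, ∑ x, U p q c x ^ 2 = ∑ l, (A p l - A q l) * (A p l - A q l) := by
    intro p q c
    have := hUU p q p q c c
    simpa [pow_two] using this
  simp only [hU]
  have hint : ∀ p q, ∫ ω, ∑ c, (∑ x, U p q c x * ω x) ^ 2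
      ∂(Measure.pi (fun _ : Fin k × Fin d => gaussianReal 0 1))
      = d * ∑ l, (A p l - A q l) * (A p l - A q l) := by
    intro p q
    rw [integral_finsetSum _ fun c _ => integrable_linform_sq _]
    simp [(moments_linform _).1, hUsq]
  rw [hint, hint]
  simp only [Finset.sum_mul_sum]
  rw [integral_finsetSum _ fun c _ => integrable_finsetSum _ fun c' _ => (mixed_linform _ _).1]
  have hstep : ∀ c, ∫ ω, ∑ c', (∑ x, U i j c x * ω x) ^ 2 * (∑ x, U m n c' x * ω x) ^ 2
      ∂(Measure.pi (fun _ : Fin k × Fin d => gaussianReal 0 1))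
      = d * ((∑ l, (A i l - A j l) * (A i l - A j l)) * (∑ l, (A m l - A n l) * (A m l - A n l)))
        + 2 * (∑ l, (A i l - A j l) * (A m l - A n l)) ^ 2 := by
    intro c
    rw [integral_finsetSum _ fun c' _ => (mixed_linform _ _).1]
    simp only [(mixed_linform _ _).2, hUsq, hUU]
    rw [Finset.sum_add_distrib]
    simp [ite_pow]
  simp only [hstep]
  have hKK : (A * Aᵀ) i m + (A * Aᵀ) j n - (A * Aᵀ) i n - (A * Aᵀ) j m
      = ∑ l, (A i l - A j l) * (A m l - A n l) := by
    simp only [Matrix.mul_apply, Matrix.transpose_apply]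
    rw [← Finset.sum_add_distrib, ← Finset.sum_sub_distrib, ← Finset.sum_sub_distrib]
    exact Finset.sum_congr rfl fun l _ => by ring
  rw [hKK]
  simp only [Finset.sum_const, Finset.card_univ, Fintype.card_fin, nsmul_eq_mul]
  ring
end
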